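/- Let a, k ∈ ℚ with k > 0, k ≠ 27/2, and 4a − 27 = k², and suppose p = X³ − aX − a is a cubic Galois polynomial. Let q₂ = −(3/k)X² + ((9−k)/(2k))X + 2a/k and let p₂ ∈ ℚ[X] be the cubic factor of q₂(q₂(q₂(X))) − X complementary to p·(q₂ − X). Then p₂ is linearly equivalent to X³ − cX − c with c = (27/4)·(31k² − 108k + 729)/(2k − 27)²: there exist α, β, λ ∈ ℚ with α ≠ 0, λ ≠ 0 such that λ·p₂(αX + β) = X³ − cX − c. In particular the characteristic number of the class of p₂ is k₂ = 27k/|2k − 27|. -/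

import Mathlib

open Polynomial

/-!
Up to conjugation by an affine map, a quadratic polynomial with a 3-cycle is `X² - (τ² + τ + 2)`,
where `τ` is the sum of the cycle; its six points of period three form two 3-cycles, of sums `τ`
and `-1 - τ`.
The monic cubics with these roots belong to one family, indexed by the sum. The member of sum `τ`
is linearly equivalent to `X³ - cX - c` with `4c - 27 = k²` and `k (4τ + 3) = 27`, and the
normalizing substitution is exactly the affine map that conjugates `q₂` to `X² - (τ² + τ + 2)`.
So passing from `p` to `p₂` is the exchange `τ ↦ -1 - τ`, which is `k ↦ 27k/(2k - 27)` in terms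
of `k`.
-/

section CommRing

variable {R : Type*} [CommRing R]

lemma comp_comp_eq_of_comp_eq {l f g f' g' : R[X]} (h : l.comp f = g.comp l)
    (h' : l.comp f' = g'.comp l) : l.comp (f.comp f') = (g.comp g').comp l := by
  rw [← comp_assoc, h, comp_assoc, h', comp_assoc]

lemma C_mul_sub_X_eq_comp {α β : R} {f g : R[X]}
    (h : (C α * X + C β).comp f = g.comp (C α * X + C β)) :
    C α * (f - X) = (g - X).comp (C α * X + C β) := by
  rw [sub_comp, ← h, add_comp, mul_comp, C_comp, C_comp, X_comp, X_comp]
  ring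

/-- The quadratic polynomial of the form `X² + t` that has a 3-cycle of sum `τ`. -/
noncomputable def threeCycleMap (τ : R) : R[X] :=
  X ^ 2 - C (τ ^ 2 + τ + 2)

/-- The monic cubic whose roots are the 3-cycle of sum `τ` of `threeCycleMap τ`. Its coefficients
are the elementary symmetric functions of `x, y, z`, computed from `τ = x + y + z` and
`y = x² + t`, `z = y² + t`, `x = z² + t` with `t = -(τ² + τ + 2)`. -/
noncomputable def threeCycleCubic (τ : R) : R[X] :=
  X ^ 3 - C τ * X ^ 2 - C (τ ^ 2 + 2 * τ + 3) * X + C (τ ^ 3 + 2 * τ ^ 2 + 3 * τ + 1)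

lemma threeCycleMap_comp_comp_sub_X (τ : R) :
    (threeCycleMap τ).comp ((threeCycleMap τ).comp (threeCycleMap τ)) - X =
      (threeCycleMap τ - X) * threeCycleCubic τ * threeCycleCubic (-1 - τ) := by
  simp only [threeCycleMap, threeCycleCubic, sub_comp, pow_comp, X_comp, C_comp]
  simp only [map_add, map_sub, map_mul, map_pow, map_neg, map_one, map_ofNat]
  ring

end CommRing

section Field

variable {F : Type*} [Field F]

/-- Linear equivalence of polynomials: `g` arises from `f` by an invertible linear change of
variable, up to a nonzero scalar. -/
def LinearlyEquivalent (f g : F[X]) : Prop :=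
  ∃ α β lam : F, α ≠ 0 ∧ lam ≠ 0 ∧ C lam * f.comp (C α * X + C β) = g

lemma LinearlyEquivalent.symm {f g : F[X]} (h : LinearlyEquivalent f g) :
    LinearlyEquivalent g f := by
  obtain ⟨α, β, lam, hα, hlam, rfl⟩ := h
  refine ⟨α⁻¹, -(α⁻¹ * β), lam⁻¹, inv_ne_zero hα, inv_ne_zero hlam, ?_⟩
  have hinv : (C α * X + C β).comp (C α⁻¹ * X + C (-(α⁻¹ * β))) = X := by
    simp only [add_comp, mul_comp, C_comp, X_comp, mul_add, ← mul_assoc, ← C_mul, add_assoc,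
      ← C_add]
    simp [hα]
  rw [mul_comp, C_comp, comp_assoc, hinv, comp_X, ← mul_assoc, ← C_mul, inv_mul_cancel₀ hlam,
    C_1, one_mul]

lemma LinearlyEquivalent.trans {f g h : F[X]} (hfg : LinearlyEquivalent f g)
    (hgh : LinearlyEquivalent g h) : LinearlyEquivalent f h := by
  obtain ⟨α, β, lam, hα, hlam, rfl⟩ := hfg
  obtain ⟨α', β', lam', hα', hlam', rfl⟩ := hgh
  refine ⟨α * α', α * β' + β, lam' * lam, mul_ne_zero hα hα', mul_ne_zero hlam' hlam, ?_⟩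
  have hcomp : (C α * X + C β).comp (C α' * X + C β') =
      C (α * α') * X + C (α * β' + β) := by
    simp only [add_comp, mul_comp, C_comp, X_comp, C_add, C_mul]
    ring
  rw [mul_comp, C_comp, comp_assoc, hcomp, C_mul, mul_assoc]

/-- The quadratic polynomial `q₂`, which permutes the roots of `X³ - aX - a` cyclically when
`4a - 27 = k²`. -/
noncomputable def couplingMap (a k : F) : F[X] :=
  -C (3 / k) * X ^ 2 + C ((9 - k) / (2 * k)) * X + C (2 * a / k)

/-- The affine map conjugating `couplingMap a k` to a polynomial `X² + t`, obtained by completing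
the square. It is also the substitution that takes `threeCycleCubic (threeCycleSum k)` to a multiple
of `X³ - cX - c`. -/
noncomputable def normalizingMap (k : F) : F[X] :=
  C (-(3 / k)) * X + C ((9 - k) / (2 * k) / 2)

lemma linearlyEquivalent_comp_normalizingMap [NeZero (3 : F)] {k lam : F} (hk : k ≠ 0)
    (hlam : lam ≠ 0) (f : F[X]) :
    LinearlyEquivalent f (C lam * f.comp (normalizingMap k)) :=
  ⟨_, _, lam, neg_ne_zero.mpr (div_ne_zero three_ne_zero hk), hlam, rfl⟩

/-- The sum `τ` of the 3-cycle belonging to the parameter `k`, which solves `k (4τ + 3) = 27`: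
three times the constant term of `normalizingMap k`. It distinguishes `k` from `-k`, although both
are square roots of `4c - 27`. -/
def threeCycleSum (k : F) : F :=
  3 * ((9 - k) / (2 * k) / 2)

variable [NeZero (2 : F)] {k : F}

lemma threeCycleSum_eq_neg_one_sub {l : F} (hk : k ≠ 0) (hl : l ≠ 0)
    (h : 2 * k * l = 27 * (k + l)) : threeCycleSum l = -1 - threeCycleSum k := by
  have h2 : (2 : F) ≠ 0 := two_ne_zero
  unfold threeCycleSum
  field_simp
  linear_combination -h

lemma normalizingMap_comp_couplingMap {a : F} (hk : k ≠ 0) (ha : 4 * a - 27 = k ^ 2) :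
    (normalizingMap k).comp (couplingMap a k) =
      (threeCycleMap (threeCycleSum k)).comp (normalizingMap k) := by
  have h2 : (2 : F) ≠ 0 := two_ne_zero
  obtain ⟨σ, hσ⟩ : ∃ σ, σ = (9 - k) / (2 * k) / 2 := ⟨_, rfl⟩
  have hlin : (9 - k) / (2 * k) = 2 * σ := by
    rw [hσ, mul_div_cancel₀ _ h2]
  have hconst : -(3 / k) * (2 * a / k) + σ = σ ^ 2 - ((3 * σ) ^ 2 + 3 * σ + 2) := by
    rw [hσ]
    field_simp
    linear_combination -24 * ha
  have hCconst := congrArg C hconst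
  simp only [couplingMap, normalizingMap, threeCycleSum, threeCycleMap, hlin,
    mul_div_cancel_left₀ σ h2, add_comp, sub_comp, mul_comp, pow_comp, X_comp, C_comp]
  simp only [map_add, map_sub, map_mul, map_pow, map_neg, map_ofNat] at hCconst ⊢
  linear_combination hCconst

lemma threeCycleCubic_comp_normalizingMap {c : F} (hk : k ≠ 0) (hc : 4 * c - 27 = k ^ 2) :
    (threeCycleCubic (threeCycleSum k)).comp (normalizingMap k) =
      C ((-(3 / k)) ^ 3) * (X ^ 3 - C c * X - C c) := by
  have h2 : (2 : F) ≠ 0 := two_ne_zero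
  obtain ⟨σ, hσ⟩ : ∃ σ, σ = (9 - k) / (2 * k) / 2 := ⟨_, rfl⟩
  obtain ⟨α, hα⟩ : ∃ α, α = -(3 / k) := ⟨_, rfl⟩
  have hασ : 4 * σ + 1 = -(3 * α) := by
    rw [hσ, hα]
    field_simp
    ring
  have hcα : c * α ^ 2 = 12 * σ ^ 2 + 6 * σ + 3 := by
    rw [hσ, hα]
    field_simp
    linear_combination 36 * hc
  have hCασ := congrArg C hασ
  have hCcα := congrArg C hcα
  simp only [threeCycleSum, normalizingMap, ← hσ, ← hα, threeCycleCubic, add_comp, sub_comp,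
    mul_comp, pow_comp, X_comp, C_comp]
  simp only [map_add, map_mul, map_pow, map_neg, map_one, map_ofNat] at hCασ hCcα ⊢
  linear_combination (C α * X + C α) * hCcα + (4 * C σ ^ 2 + 2 * C σ + 1) * hCασ

variable [NeZero (3 : F)]

lemma linearlyEquivalent_threeCycleCubic {c : F} (hk : k ≠ 0) (hc : 4 * c - 27 = k ^ 2) :
    LinearlyEquivalent (threeCycleCubic (threeCycleSum k)) (X ^ 3 - C c * X - C c) := by
  have hα : (-(3 / k)) ^ 3 ≠ 0 :=
    pow_ne_zero 3 (neg_ne_zero.mpr (div_ne_zero three_ne_zero hk))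
  convert linearlyEquivalent_comp_normalizingMap hk (inv_ne_zero hα) _ using 1
  rw [threeCycleCubic_comp_normalizingMap hk hc, ← mul_assoc, ← C_mul, inv_mul_cancel₀ hα, C_1,
    one_mul]

lemma couplingMap_comp_comp_sub_X {a : F} (hk : k ≠ 0) (ha : 4 * a - 27 = k ^ 2) :
    (couplingMap a k).comp ((couplingMap a k).comp (couplingMap a k)) - X =
      (X ^ 3 - C a * X - C a) * (couplingMap a k - X) * (C ((-(3 / k)) ^ 3) *
        (threeCycleCubic (-1 - threeCycleSum k)).comp (normalizingMap k)) := by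
  have hα : C (-(3 / k)) ≠ 0 := C_ne_zero.mpr (neg_ne_zero.mpr (div_ne_zero three_ne_zero hk))
  have hconj := normalizingMap_comp_couplingMap hk ha
  have hone : C (-(3 / k)) * (couplingMap a k - X) =
      (threeCycleMap (threeCycleSum k) - X).comp (normalizingMap k) :=
    C_mul_sub_X_eq_comp hconj
  apply mul_left_cancel₀ hα
  calc
    _ = ((threeCycleMap (threeCycleSum k)).comp ((threeCycleMap (threeCycleSum k)).comp
          (threeCycleMap (threeCycleSum k))) - X).comp (normalizingMap k) :=
      C_mul_sub_X_eq_comp (comp_comp_eq_of_comp_eq hconj (comp_comp_eq_of_comp_eq hconj hconj))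
    _ = C (-(3 / k)) * (couplingMap a k - X) *
          (C ((-(3 / k)) ^ 3) * (X ^ 3 - C a * X - C a)) *
          (threeCycleCubic (-1 - threeCycleSum k)).comp (normalizingMap k) := by
      rw [threeCycleMap_comp_comp_sub_X, mul_comp, mul_comp, ← hone,
        threeCycleCubic_comp_normalizingMap hk ha]
    _ = _ := by ring

lemma linearlyEquivalent_complementary_factor {a : F} {r : F[X]} (hk : k ≠ 0)
    (ha : 4 * a - 27 = k ^ 2)
    (hr : (couplingMap a k).comp ((couplingMap a k).comp (couplingMap a k)) - X =
      (X ^ 3 - C a * X - C a) * (couplingMap a k - X) * r) :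
    LinearlyEquivalent (threeCycleCubic (-1 - threeCycleSum k)) r := by
  have hα : -(3 / k) ≠ 0 := neg_ne_zero.mpr (div_ne_zero three_ne_zero hk)
  have hp0 : X ^ 3 - C a * X - C a ≠ 0 := fun h ↦ by
    simpa [coeff_X, coeff_C] using congrArg (coeff · 3) h
  have hq0 : couplingMap a k - X ≠ 0 := fun h ↦ hα <| by
    simpa [couplingMap, coeff_X, coeff_C] using congrArg (coeff · 2) h
  have hr_eq := mul_left_cancel₀ (mul_ne_zero hp0 hq0)
    (hr.symm.trans (couplingMap_comp_comp_sub_X hk ha))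
  rw [hr_eq]
  exact linearlyEquivalent_comp_normalizingMap hk (pow_ne_zero 3 hα) _

theorem stmt10_general {a c : F} {p q₂ p₂ : F[X]} (hk : k ≠ 0) (hk' : k ≠ 27 / 2)
    (hak : 4 * a - 27 = k ^ 2) (hp : p = X ^ 3 - C a * X - C a)
    (hq₂ : q₂ = -C (3 / k) * X ^ 2 + C ((9 - k) / (2 * k)) * X + C (2 * a / k))
    (hp₂ : q₂.comp (q₂.comp q₂) - X = p * (q₂ - X) * p₂)
    (hc : c = (27 / 4) * (31 * k ^ 2 - 108 * k + 729) / (2 * k - 27) ^ 2) :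
    LinearlyEquivalent p₂ (X ^ 3 - C c * X - C c) ∧
      4 * c - 27 = (27 * k / (2 * k - 27)) ^ 2 := by
  have h4 : (4 : F) ≠ 0 := by
    simpa only [show (4 : F) = 2 ^ 2 by norm_num] using pow_ne_zero 2 two_ne_zero
  have h27 : (27 : F) ≠ 0 := by
    simpa only [show (27 : F) = 3 ^ 3 by norm_num] using pow_ne_zero 3 three_ne_zero
  have hd : 2 * k - 27 ≠ 0 := fun h ↦ hk' <| by
    rw [eq_div_iff two_ne_zero]
    linear_combination h
  set k₂ := 27 * k / (2 * k - 27) with hk₂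
  have hk₂0 : k₂ ≠ 0 := div_ne_zero (mul_ne_zero h27 hk) hd
  have hexch : 2 * k * k₂ = 27 * (k + k₂) := by
    linear_combination (eq_div_iff hd).mp hk₂
  have hck₂ : 4 * c - 27 = k₂ ^ 2 := by
    rw [hc, hk₂, div_pow, eq_div_iff (pow_ne_zero 2 hd), sub_mul, mul_div_assoc',
      div_mul_cancel₀ _ (pow_ne_zero 2 hd)]
    linear_combination (31 * k ^ 2 - 108 * k + 729) * (mul_div_cancel₀ 27 h4)
  obtain rfl : q₂ = couplingMap a k := hq₂
  have hp₂_equiv := linearlyEquivalent_complementary_factor hk hak (hp ▸ hp₂)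
  rw [← threeCycleSum_eq_neg_one_sub hk hk₂0 hexch] at hp₂_equiv
  exact ⟨hp₂_equiv.symm.trans (linearlyEquivalent_threeCycleCubic hk₂0 hck₂), hck₂⟩

end Field

/-- the coupled polynomial `p₂` of `p = X³ − aX − a`
(via `q₂`) is linearly equivalent to `X³ − cX − c` with
`c = (27/4)(31k² − 108k + 729)/(2k − 27)²`, and the characteristic number of
its class is `k₂ = 27k/|2k − 27|`. -/
theorem stmt10 (a k : ℚ) (hk : 0 < k) (hk' : k ≠ 27/2) (hak : 4*a - 27 = k^2)
    (p : ℚ[X]) (hp : p = X^3 - C a * X - C a) (hirr : Irreducible p)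
    (x₁ x₂ x₃ : ℝ) (h12 : x₁ ≠ x₂) (h13 : x₁ ≠ x₃) (h23 : x₂ ≠ x₃)
    (hx₁ : aeval x₁ p = 0) (hx₂ : aeval x₂ p = 0) (hx₃ : aeval x₃ p = 0)
    (q₂ : ℚ[X]) (hq₂ : q₂ = - C (3/k) * X^2 + C ((9-k)/(2*k)) * X + C (2*a/k))
    (p₂ : ℚ[X]) (hp₂ : q₂.comp (q₂.comp q₂) - X = p * (q₂ - X) * p₂)
    (c : ℚ) (hc : c = (27/4) * (31*k^2 - 108*k + 729)/(2*k - 27)^2) :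
    (∃ α β lam : ℚ, α ≠ 0 ∧ lam ≠ 0 ∧
      C lam * p₂.comp (C α * X + C β) = X^3 - C c * X - C c) ∧
    4*c - 27 = (27*k/|2*k - 27|)^2 := by
  simpa only [LinearlyEquivalent, div_pow, sq_abs] using
    stmt10_general hk.ne' hk' hak hp hq₂ hp₂ hc
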